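/- Let A be a unital star algebra over ℂ and z⁰,z¹,z²,z³ ∈ A. Let U be the 2×2 matrix over A given by U = [[z⁰ + i z³, i z¹ + z²], [i z¹ − z², z⁰ − i z³]] (that is, U = z⁰·1 + i σ₁ z¹ + i σ₂ z² + i σ₃ z³ with σ_k the Pauli matrices). Then the condition 'U·U* = U*·U and U·U* is a scalar matrix c·1 for some c ∈ A' holds if and only if the following seven relations hold: (i) Σ_μ z^μ (z^μ)* = Σ_μ (z^μ)* z^μ; and for each cyclic permutation (k,ℓ,m) of (1,2,3): (ii) z^k (z⁰)* − z⁰ (z^k)* + z^ℓ (z^m)* − z^m (z^ℓ)* = 0 and (iii) (z⁰)* z^k − (z^k)* z⁰ + (z^ℓ)* z^m − (z^m)* z^ℓ = 0. -/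

import Mathlib

/-- The matrix `U = z⁰·1 + i σ₁ z¹ + i σ₂ z² + i σ₃ z³` with entries in a unital
star `ℂ`-algebra. -/
noncomputable def pauliU {A : Type*} [Ring A] [Algebra ℂ A] (z0 z1 z2 z3 : A) :
    Matrix (Fin 2) (Fin 2) A :=
  !![z0 + Complex.I • z3, Complex.I • z1 + z2;
     Complex.I • z1 - z2, z0 - Complex.I • z3]

/-!
The matrices `iσ₁, iσ₂, iσ₃` square to `-1` and anticommute, with `(iσ₁)(iσ₂) = -iσ₃` cyclically.
Hence `2 × 2` matrices over `A` multiply in Pauli coordinates by the quaternion rule, with the sign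
of the cross product reversed, and `U*` has coordinates `(z⁰*, -z¹*, -z²*, -z³*)`. The seven
relations compare the coordinates of `U U*` and `U* U`, which are unique since `2` and `i` are
invertible.
-/

theorem add_eq_add_and_sub_eq_sub_iff {G : Type*} [AddCommGroup G] [IsAddTorsionFree G]
    {x y x' y' : G} : x + y = x' + y' ∧ x - y = x' - y' ↔ x = x' ∧ y = y' := by
  constructor
  · rintro ⟨hadd, hsub⟩
    have two_nsmul_eq : 2 • x = 2 • x' := by
      calc 2 • x = (x + y) + (x - y) := by abel
        _ = (x' + y') + (x' - y') := by rw [hadd, hsub]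
        _ = 2 • x' := by abel
    obtain rfl : x = x' := nsmul_right_injective two_ne_zero two_nsmul_eq
    exact ⟨rfl, add_left_cancel hadd⟩
  · rintro ⟨rfl, rfl⟩
    exact ⟨rfl, rfl⟩

section Algebra

variable {A : Type*} [Ring A] [Algebra ℂ A]

theorem pauliU_inj {z0 z1 z2 z3 w0 w1 w2 w3 : A} :
    pauliU z0 z1 z2 z3 = pauliU w0 w1 w2 w3 ↔ z0 = w0 ∧ z1 = w1 ∧ z2 = w2 ∧ z3 = w3 := by
  have : IsAddTorsionFree A := .of_isTorsionFree ℂ A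
  have I_smul_inj {x y : A} : Complex.I • x = Complex.I • y ↔ x = y :=
    smul_right_inj Complex.I_ne_zero
  calc pauliU z0 z1 z2 z3 = pauliU w0 w1 w2 w3
    _ ↔ (z0 + Complex.I • z3 = w0 + Complex.I • w3 ∧ z0 - Complex.I • z3 = w0 - Complex.I • w3) ∧
        (Complex.I • z1 + z2 = Complex.I • w1 + w2 ∧
          Complex.I • z1 - z2 = Complex.I • w1 - w2) := by
      simp only [pauliU, EmbeddingLike.apply_eq_iff_eq, Matrix.vecCons_inj, and_true]
      tauto
    _ ↔ (z0 = w0 ∧ z3 = w3) ∧ (z1 = w1 ∧ z2 = w2) := by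
      simp only [add_eq_add_and_sub_eq_sub_iff, I_smul_inj]
    _ ↔ z0 = w0 ∧ z1 = w1 ∧ z2 = w2 ∧ z3 = w3 := by tauto

theorem smul_one_eq_pauliU (c : A) :
    c • (1 : Matrix (Fin 2) (Fin 2) A) = pauliU c 0 0 0 := by
  simp [pauliU, Matrix.one_fin_two]

theorem exists_pauliU_eq_smul_one_iff {z0 z1 z2 z3 : A} :
    (∃ c : A, pauliU z0 z1 z2 z3 = c • (1 : Matrix (Fin 2) (Fin 2) A)) ↔
      z1 = 0 ∧ z2 = 0 ∧ z3 = 0 := by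
  simp only [smul_one_eq_pauliU, pauliU_inj, exists_and_right, exists_eq', true_and]

theorem pauliU_mul_pauliU (z0 z1 z2 z3 w0 w1 w2 w3 : A) :
    pauliU z0 z1 z2 z3 * pauliU w0 w1 w2 w3 =
      pauliU (z0 * w0 - z1 * w1 - z2 * w2 - z3 * w3)
        (z0 * w1 + z1 * w0 - (z2 * w3 - z3 * w2))
        (z0 * w2 + z2 * w0 - (z3 * w1 - z1 * w3))
        (z0 * w3 + z3 * w0 - (z1 * w2 - z2 * w1)) := by
  simp only [pauliU, Matrix.mul_fin_two, mul_add, add_mul, mul_sub, sub_mul, smul_add, smul_sub,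
    smul_mul_assoc, mul_smul_comm, smul_smul, Complex.I_mul_I, neg_one_smul]
  ext i j
  fin_cases i <;> fin_cases j <;> dsimp <;> abel

end Algebra

section StarAlgebra

variable {A : Type*} [Ring A] [Algebra ℂ A] [StarRing A] [StarModule ℂ A]

theorem conjTranspose_pauliU (z0 z1 z2 z3 : A) :
    (pauliU z0 z1 z2 z3).conjTranspose =
      pauliU (star z0) (-star z1) (-star z2) (-star z3) := by
  ext i j
  fin_cases i <;> fin_cases j <;> simp [pauliU, sub_eq_add_neg]

theorem pauliU_mul_conjTranspose (z0 z1 z2 z3 : A) :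
    pauliU z0 z1 z2 z3 * (pauliU z0 z1 z2 z3).conjTranspose =
      pauliU (z0 * star z0 + z1 * star z1 + z2 * star z2 + z3 * star z3)
        (z1 * star z0 - z0 * star z1 + z2 * star z3 - z3 * star z2)
        (z2 * star z0 - z0 * star z2 + z3 * star z1 - z1 * star z3)
        (z3 * star z0 - z0 * star z3 + z1 * star z2 - z2 * star z1) := by
  rw [conjTranspose_pauliU, pauliU_mul_pauliU]
  congr 1 <;> noncomm_ring

theorem conjTranspose_mul_pauliU (z0 z1 z2 z3 : A) :
    (pauliU z0 z1 z2 z3).conjTranspose * pauliU z0 z1 z2 z3 =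
      pauliU (star z0 * z0 + star z1 * z1 + star z2 * z2 + star z3 * z3)
        (star z0 * z1 - star z1 * z0 + star z2 * z3 - star z3 * z2)
        (star z0 * z2 - star z2 * z0 + star z3 * z1 - star z1 * z3)
        (star z0 * z3 - star z3 * z0 + star z1 * z2 - star z2 * z1) := by
  rw [conjTranspose_pauliU, pauliU_mul_pauliU]
  congr 1 <;> noncomm_ring

end StarAlgebra

/-- `U U* = U* U` is a scalar matrix iff the seven relations hold. -/
theorem stmt_3 {A : Type*} [Ring A] [Algebra ℂ A] [StarRing A] [StarModule ℂ A]
    (z0 z1 z2 z3 : A) :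
    (pauliU z0 z1 z2 z3 * (pauliU z0 z1 z2 z3).conjTranspose =
        (pauliU z0 z1 z2 z3).conjTranspose * pauliU z0 z1 z2 z3 ∧
      ∃ c : A, pauliU z0 z1 z2 z3 * (pauliU z0 z1 z2 z3).conjTranspose =
        c • (1 : Matrix (Fin 2) (Fin 2) A)) ↔
    ((z0 * star z0 + z1 * star z1 + z2 * star z2 + z3 * star z3 =
        star z0 * z0 + star z1 * z1 + star z2 * z2 + star z3 * z3) ∧
      (z1 * star z0 - z0 * star z1 + z2 * star z3 - z3 * star z2 = 0 ∧
       z2 * star z0 - z0 * star z2 + z3 * star z1 - z1 * star z3 = 0 ∧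
       z3 * star z0 - z0 * star z3 + z1 * star z2 - z2 * star z1 = 0) ∧
      (star z0 * z1 - star z1 * z0 + star z2 * z3 - star z3 * z2 = 0 ∧
       star z0 * z2 - star z2 * z0 + star z3 * z1 - star z1 * z3 = 0 ∧
       star z0 * z3 - star z3 * z0 + star z1 * z2 - star z2 * z1 = 0)) := by
  rw [pauliU_mul_conjTranspose, conjTranspose_mul_pauliU, pauliU_inj, exists_pauliU_eq_smul_one_iff]
  constructor
  · rintro ⟨⟨norm_eq, eq1, eq2, eq3⟩, left1, left2, left3⟩
    exact ⟨norm_eq, ⟨left1, left2, left3⟩,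
      eq1.symm.trans left1, eq2.symm.trans left2, eq3.symm.trans left3⟩
  · rintro ⟨norm_eq, ⟨left1, left2, left3⟩, right1, right2, right3⟩
    exact ⟨⟨norm_eq, left1.trans right1.symm, left2.trans right2.symm, left3.trans right3.symm⟩,
      left1, left2, left3⟩
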